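/- arXiv:2505.23691 — 3 statements merged into one kernel-verified Lean document; each statement's English description precedes it below -/
import Mathlib

section
/- Let V be a finite set, r and s natural numbers with 1 ≤ s and 2s ≤ r, and E_r a finite set of subsets of V each of cardinality exactly r. For every injective s-tuple x : Fin s → V, the degree of x in the transformed graph G^(s), namely d_x = Σ_{y ∈ T} w(x,y), equals D_[x] · C(r−s, s) · s!, where D_[x] = |{e ∈ E_r : [x] ⊆ e}| is the number of hyperedges containing the underlying set [x] of x, and C(·,·) denotes the binomial coefficient. -/
/-!
Double counting of the pairs `(e, y)` where `e` is a hyperedge containing `[x]` and `y` is an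
injective `s`-tuple with entries in `e \ [x]`. For a fixed `y`, the number of such `e` is `w(x, y)`.
For a fixed `e ⊇ [x]`, the set `e \ [x]` has `r - s` elements, so by `card_tset_subset` the number
of such `y` is the descending factorial of `r - s` of length `s`, which is `C(r - s, s) * s!`.
-/

open Finset

/-- The underlying vertex set `[x]` of an injective `s`-tuple `x : Fin s ↪ V`. -/
def tset {V : Type*} {s : ℕ} (x : Fin s ↪ V) : Finset V := Finset.univ.map x

/-- `D_A`: the number of hyperedges of `E_r` containing the set `A`. -/
def Dset {V : Type*} [DecidableEq V] (Er : Finset (Finset V)) (A : Finset V) : ℕ :=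
  (Er.filter fun e => A ⊆ e).card

/-- The edge weight `w(x,y)` of the transformed graph `G^(s)`: the number of hyperedges
containing `[x] ∪ [y]` when `[x]` and `[y]` are disjoint, and `0` otherwise. -/
def wgt {V : Type*} [DecidableEq V] {s : ℕ} (Er : Finset (Finset V))
    (x y : Fin s ↪ V) : ℕ :=
  if Disjoint (tset x) (tset y) then (Er.filter fun e => tset x ∪ tset y ⊆ e).card else 0

/-- The degree `d_x = ∑_y w(x,y)` of `x` in the transformed graph `G^(s)`. -/
noncomputable def deg {V : Type*} [Fintype V] [DecidableEq V] {s : ℕ}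
    (Er : Finset (Finset V)) (x : Fin s ↪ V) : ℕ :=
  ∑ y : Fin s ↪ V, wgt Er x y

/-- The vertex set `V_G = {x : D_[x] ≥ 1}` of injective `s`-tuples appearing in at
least one hyperedge. -/
noncomputable def VG (V : Type*) [Fintype V] [DecidableEq V] (Er : Finset (Finset V))
    (s : ℕ) : Finset (Fin s ↪ V) :=
  Finset.univ.filter fun x => 1 ≤ Dset Er (tset x)

theorem card_tset_subset {V : Type*} [Fintype V] [DecidableEq V] (s : ℕ) (B : Finset V) :
    (univ.filter fun y : Fin s ↪ V => tset y ⊆ B).card = B.card.descFactorial s := by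
  have hmem : ∀ y : Fin s ↪ V, tset y ⊆ B ↔ ∀ i, y i ∈ B := by
    intro y
    simp [tset, Finset.subset_iff]
  have h : Fintype.card (Fin s ↪ B) = B.card.descFactorial s := by
    simp [Fintype.card_embedding_eq]
  rw [← h, ← Finset.card_univ]
  symm
  refine Finset.card_bij (fun f _ => f.trans (Function.Embedding.subtype _)) ?_ ?_ ?_
  · intro f _
    simp [hmem]
  · intro f _ g _ hfg
    ext i
    exact DFunLike.congr_fun hfg i
  · intro y hy
    have hy' := (hmem y).1 (Finset.mem_filter.1 hy).2
    exact ⟨⟨fun i => ⟨y i, hy' i⟩, fun i j hij => y.injective (congrArg Subtype.val hij)⟩,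
      Finset.mem_univ _, by ext i; rfl⟩

/-- The weight `w(x, y)` counts the hyperedges `e ⊇ [x]` for which `[y] ⊆ e \ [x]`; the
disjointness condition is absorbed into the set difference. -/
theorem wgt_eq_card {V : Type*} [DecidableEq V] {s : ℕ} (Er : Finset (Finset V))
    (x y : Fin s ↪ V) :
    wgt Er x y = ((Er.filter fun e => tset x ⊆ e).filter fun e => tset y ⊆ e \ tset x).card := by
  unfold wgt
  split_ifs with hd
  · rw [Finset.filter_filter]
    congr 1
    ext e
    simp [Finset.union_subset_iff, Finset.subset_sdiff, hd.symm]
  · symm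
    rw [Finset.card_eq_zero, Finset.filter_eq_empty_iff]
    intro e _ h
    exact hd (Finset.subset_sdiff.1 h).2.symm

/-- For every injective `s`-tuple `x`, the degree of `x` in the
transformed graph `G^(s)` equals `D_[x] * C(r-s, s) * s!`. -/
theorem degree_transformed_graph
    (V : Type*) [Fintype V] [DecidableEq V]
    (r s : ℕ) (hs : 1 ≤ s) (hrs : 2 * s ≤ r)
    (Er : Finset (Finset V)) (hcard : ∀ e ∈ Er, e.card = r)
    (x : Fin s ↪ V) :
    deg Er x = Dset Er (tset x) * (r - s).choose s * s.factorial := by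
  unfold deg Dset
  simp_rw [wgt_eq_card, Finset.card_filter _ (Finset.filter _ Er)]
  rw [Finset.sum_comm]
  simp_rw [← Finset.card_filter, card_tset_subset]
  have hconst : ∀ e ∈ Er.filter (fun e => tset x ⊆ e),
      (e \ tset x).card.descFactorial s = (r - s).choose s * s.factorial := by
    intro e he
    obtain ⟨he, hx⟩ := Finset.mem_filter.1 he
    rw [Finset.card_sdiff_of_subset hx, hcard e he, Nat.descFactorial_eq_factorial_mul_choose,
      mul_comm]
    simp [tset]
  rw [Finset.sum_congr rfl hconst, Finset.sum_const, smul_eq_mul, mul_assoc]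
end

section
/- Let V be a finite set, 1 ≤ s, 2s ≤ r, and E_r a finite set of subsets of V each of cardinality exactly r. Assume additionally that any two disjoint s-element subsets of V are contained in at most one common hyperedge, so that all weights w(x,y) are 0 or 1, and let E_G be the set of unordered edges {x,y} of G^(s) with x,y ∈ V_G and w(x,y) = 1; assume V_G and E_G are nonempty. Then the second spectral moment m_2 = (1/|V_G|) Σ_{x ∈ V_G} (P²)_{xx} satisfies m_2 = (C(r,s) · |E_r| / (C(r−s,s) · |V_G|)) · (1/|E_G|) · Σ_{{x,y} ∈ E_G} 1/(D_[x] · D_[y]); i.e., m_2 is the stated constant times the expectation of 1/(D_[x]D_[y]) over a uniformly random edge of G^(s). -/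
/-!
By the tuple count `card_tuples_subset`, every hyperedge containing `[x]` contributes
`c = (r-s)(r-s-1)⋯(r-2s+1) = s!·C(r-s,s)` neighbours `y`, so `d_x = c·D_[x]` (`deg_eq`). As the
weights are `0` or `1` and symmetric, the trace of `P²` is the sum of `1/(c² D_[x] D_[y])` over
adjacent ordered pairs, and since adjacent tuples are distinct, this is twice the corresponding sum
over the unordered edges (`sum_pairs`).

The same double count applied to the constant function gives `2|E_G| = ∑ d_x = c ∑ D_[x]`, and
counting pairs (tuple, hyperedge) gives `∑ D_[x] = |E_r|·s!·C(r,s)` (`sum_Dset`). Substituting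
`|E_G|` turns the factor `2/c²` into the stated constant.
-/

open Finset

/-- The edge set `E_G` of the transformed graph `G^(s)`: unordered pairs `{x,y}` of
vertices of `V_G` with `w(x,y) = 1` (all weights are `0` or `1` for a linear
hypergraph). -/
noncomputable def EG (V : Type*) [Fintype V] [DecidableEq V] (Er : Finset (Finset V))
    (s : ℕ) : Finset (Finset (Fin s ↪ V)) :=
  Finset.image (fun q : (Fin s ↪ V) × (Fin s ↪ V) => {q.1, q.2})
    ((Finset.univ ×ˢ Finset.univ).filter fun q =>
      q.1 ∈ VG V Er s ∧ q.2 ∈ VG V Er s ∧ wgt Er q.1 q.2 = 1)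

lemma card_tset {V : Type*} {s : ℕ} (x : Fin s ↪ V) : (tset x).card = s := by
  simp [tset]

lemma mem_tset {V : Type*} {s : ℕ} (x : Fin s ↪ V) (i : Fin s) : x i ∈ tset x := by
  simp [tset]

lemma card_tuples_subset {V : Type*} [Fintype V] [DecidableEq V] (s : ℕ) (A : Finset V) :
    (univ.filter fun x : Fin s ↪ V => tset x ⊆ A).card = A.card.descFactorial s := by
  have h : Fintype.card (Fin s ↪ A) = A.card.descFactorial s := by
    rw [Fintype.card_embedding_eq]; simp
  rw [← h, ← Finset.card_univ]
  symm
  refine Finset.card_bij (fun f _ => f.trans (Function.Embedding.subtype _)) ?_ ?_ ?_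
  · intro f _
    simp only [mem_filter, mem_univ, true_and]
    intro v hv
    simp only [tset, mem_map, mem_univ, true_and] at hv
    obtain ⟨i, rfl⟩ := hv
    exact (f i).2
  · intro f _ g _ hfg
    ext i
    exact DFunLike.congr_fun hfg i
  · intro x hx
    simp only [mem_filter, mem_univ, true_and] at hx
    refine ⟨⟨fun i => ⟨x i, hx (mem_tset x i)⟩, ?_⟩, mem_univ _, ?_⟩
    · intro i j hij
      exact x.injective (congrArg Subtype.val hij)
    · ext i; rfl

lemma wgt_comm {V : Type*} [DecidableEq V] {s : ℕ} (Er : Finset (Finset V))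
    (x y : Fin s ↪ V) : wgt Er x y = wgt Er y x := by
  simp only [wgt, disjoint_comm (a := tset x), union_comm (tset x)]

lemma deg_eq {V : Type*} [Fintype V] [DecidableEq V] {r s : ℕ}
    (Er : Finset (Finset V)) (hcard : ∀ e ∈ Er, e.card = r) (x : Fin s ↪ V) :
    deg Er x = (r - s).descFactorial s * Dset Er (tset x) := by
  have h1 : ∀ y : Fin s ↪ V, wgt Er x y =
      ∑ e ∈ Er.filter (fun e => tset x ⊆ e), if tset y ⊆ e \ tset x then 1 else 0 := by
    intro y
    rw [← card_filter, filter_filter, wgt]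
    split_ifs with hd
    · congr 1
      refine filter_congr fun e _ => ?_
      rw [union_subset_iff, subset_sdiff]
      exact ⟨fun h => ⟨h.1, h.2, hd.symm⟩, fun h => ⟨h.1, h.2.1⟩⟩
    · symm
      rw [card_eq_zero, filter_eq_empty_iff]
      rintro e - ⟨-, h⟩
      exact hd (subset_sdiff.1 h).2.symm
  rw [deg, sum_congr rfl fun y _ => h1 y, sum_comm]
  rw [sum_congr rfl (g := fun _ => (r - s).descFactorial s)]
  · rw [sum_const, smul_eq_mul, Dset, mul_comm]
  · intro e he
    rw [mem_filter] at he
    rw [← card_filter, card_tuples_subset, card_sdiff_of_subset he.2, hcard e he.1, card_tset]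

lemma sum_Dset {V : Type*} [Fintype V] [DecidableEq V] {r : ℕ} (s : ℕ)
    (Er : Finset (Finset V)) (hcard : ∀ e ∈ Er, e.card = r) :
    ∑ x : Fin s ↪ V, Dset Er (tset x) = Er.card * r.descFactorial s := by
  simp only [Dset, card_filter]
  rw [sum_comm, sum_congr rfl (g := fun _ => r.descFactorial s)]
  · simp
  · intro e he
    rw [← card_filter, card_tuples_subset, hcard e he]

lemma ne_of_wgt {V : Type*} [DecidableEq V] {s : ℕ} (hs : 1 ≤ s) {Er : Finset (Finset V)}
    {x y : Fin s ↪ V} (h : wgt Er x y ≠ 0) : x ≠ y := by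
  rintro rfl
  apply h
  rw [wgt, if_neg]
  intro hd
  have h0 := card_tset x
  rw [disjoint_self.1 hd] at h0
  simp at h0
  omega

lemma wgt_le_Dset {V : Type*} [DecidableEq V] {s : ℕ} (Er : Finset (Finset V))
    (x y : Fin s ↪ V) : wgt Er x y ≤ Dset Er (tset x) := by
  rw [wgt]
  split_ifs
  · exact card_le_card fun e he => by
      rw [mem_filter] at he ⊢
      exact ⟨he.1, (union_subset_iff.1 he.2).1⟩
  · exact Nat.zero_le _

/-- Each edge of `G^(s)` is the image of exactly two ordered pairs, so summing over all ordered
pairs of weight one doubles the sum over edges. Membership in `V_G` is automatic for such pairs. -/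
lemma sum_pairs {V : Type*} [Fintype V] [DecidableEq V] {s : ℕ} (hs : 1 ≤ s)
    (Er : Finset (Finset V)) (hw : ∀ x y : Fin s ↪ V, wgt Er x y ≤ 1)
    (f : Finset (Fin s ↪ V) → ℝ) :
    ∑ x : Fin s ↪ V, ∑ y : Fin s ↪ V, (wgt Er x y : ℝ) * f {x, y} =
      2 * ∑ t ∈ EG V Er s, f t := by
  have hmem : ∀ x y : Fin s ↪ V, (x ∈ VG V Er s ∧ y ∈ VG V Er s ∧ wgt Er x y = 1) ↔
      wgt Er x y = 1 := by
    intro x y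
    refine ⟨fun h => h.2.2, fun h => ⟨?_, ?_, h⟩⟩
    · simpa [VG] using h ▸ wgt_le_Dset Er x y
    · rw [wgt_comm] at h
      simpa [VG] using h ▸ wgt_le_Dset Er y x
  have h1 : ∑ x : Fin s ↪ V, ∑ y : Fin s ↪ V, (wgt Er x y : ℝ) * f {x, y} =
      ∑ q ∈ ((univ ×ˢ univ).filter fun q : (Fin s ↪ V) × (Fin s ↪ V) =>
      q.1 ∈ VG V Er s ∧ q.2 ∈ VG V Er s ∧ wgt Er q.1 q.2 = 1), f {q.1, q.2} := by
    rw [sum_filter, sum_product]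
    refine sum_congr rfl fun x _ => sum_congr rfl fun y _ => ?_
    simp only [hmem]
    have := hw x y
    interval_cases h : wgt Er x y <;> simp
  rw [h1, sum_comp f (fun q : (Fin s ↪ V) × (Fin s ↪ V) => ({q.1, q.2} : Finset _)), mul_sum]
  refine sum_congr rfl fun t ht => ?_
  simp only [hmem]
  obtain ⟨⟨a, b⟩, hab, rfl⟩ := mem_image.1 ht
  simp only [mem_filter, mem_product, mem_univ, true_and, hmem] at hab
  have hne : a ≠ b := ne_of_wgt hs (by rw [hab]; exact one_ne_zero)
  have hfib : (((univ ×ˢ univ).filter fun q : (Fin s ↪ V) × (Fin s ↪ V) =>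
      wgt Er q.1 q.2 = 1).filter fun q => ({q.1, q.2} : Finset _) = {a, b}) =
      {(a, b), (b, a)} := by
    ext ⟨u, v⟩
    simp only [mem_filter, mem_product, mem_univ, true_and, mem_insert, mem_singleton,
      Prod.mk.injEq]
    constructor
    · rintro ⟨-, h⟩
      rw [← coe_inj, coe_pair, coe_pair] at h
      exact Set.pair_eq_pair_iff.1 h
    · rintro (⟨rfl, rfl⟩ | ⟨rfl, rfl⟩)
      · exact ⟨hab, rfl⟩
      · exact ⟨by rw [wgt_comm]; exact hab, pair_comm _ _⟩
  rw [hfib, card_pair (by simp [hne])]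
  simp

/-- If any two disjoint `s`-sets lie in at most one common hyperedge
(so all weights of `G^(s)` are `0` or `1`), the second spectral moment satisfies
`m₂ = (C(r,s)·|E_r| / (C(r-s,s)·|V_G|)) · E_{{x,y} ∈ E_G}[1/(D_[x]·D_[y])]`. -/
theorem second_moment_transformed_graph_linear
    (V : Type*) [Fintype V] [DecidableEq V]
    (r s : ℕ) (hs : 1 ≤ s) (hrs : 2 * s ≤ r)
    (Er : Finset (Finset V)) (hcard : ∀ e ∈ Er, e.card = r)
    (hlin : ∀ A B : Finset V, A.card = s → B.card = s → Disjoint A B →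
      (Er.filter fun e => A ∪ B ⊆ e).card ≤ 1)
    (hVG : (VG V Er s).Nonempty) (hEG : (EG V Er s).Nonempty)
    (P : Matrix (VG V Er s) (VG V Er s) ℝ)
    (hP : ∀ x y, P x y = (wgt Er x.1 y.1 : ℝ) / (deg Er x.1 : ℝ)) :
    (1 / ((VG V Er s).card : ℝ)) * ∑ x, (P ^ 2) x x =
      ((r.choose s : ℝ) * Er.card / (((r - s).choose s : ℝ) * (VG V Er s).card)) *
        ((1 / ((EG V Er s).card : ℝ)) *
          ∑ t ∈ EG V Er s, 1 / ∏ x ∈ t, (Dset Er (tset x) : ℝ)) := by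
  have hw : ∀ x y : Fin s ↪ V, wgt Er x y ≤ 1 := by
    intro x y
    rw [wgt]
    split_ifs with h
    · exact hlin _ _ (card_tset x) (card_tset y) h
    · exact Nat.zero_le _
  set c : ℕ := (r - s).descFactorial s with hc
  have hcc : c = s.factorial * (r - s).choose s := Nat.descFactorial_eq_factorial_mul_choose _ _
  have hdeg : ∀ x : Fin s ↪ V, deg Er x = c * Dset Er (tset x) := deg_eq Er hcard
  -- Tuples outside `V_G` have all weights zero, so the trace is a sum over all ordered pairs.
  have htr : ∑ x, (P ^ 2) x x = 2 * ∑ t ∈ EG V Er s,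
      (1 / (c : ℝ) ^ 2) * (1 / ∏ x ∈ t, (Dset Er (tset x) : ℝ)) := by
    rw [← sum_pairs hs Er hw
      (fun t => (1 / (c : ℝ) ^ 2) * (1 / ∏ x ∈ t, (Dset Er (tset x) : ℝ)))]
    have hout : ∀ x y : Fin s ↪ V, x ∉ VG V Er s → wgt Er x y = 0 := by
      intro x y hx
      have h := wgt_le_Dset Er x y
      simp only [VG, mem_filter, mem_univ, true_and] at hx
      omega
    rw [← sum_subset (subset_univ (VG V Er s)), ← sum_coe_sort (VG V Er s)]
    swap
    · intro x _ hx
      exact sum_eq_zero fun y _ => by simp [hout x y hx]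
    refine sum_congr rfl fun x _ => ?_
    rw [← sum_subset (subset_univ (VG V Er s)), ← sum_coe_sort (VG V Er s)]
    swap
    · intro y _ hy
      simp [wgt_comm Er x.1 y, hout y x.1 hy]
    rw [pow_two, Matrix.mul_apply]
    refine sum_congr rfl fun y _ => ?_
    rw [hP, hP, wgt_comm Er y.1 x.1, hdeg, hdeg]
    have h1 := hw x.1 y.1
    rcases Nat.le_one_iff_eq_zero_or_eq_one.1 h1 with h | h
    · simp [h]
    · have hne : x.1 ≠ y.1 := ne_of_wgt hs (by rw [h]; exact one_ne_zero)
      rw [prod_pair hne, h]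
      push_cast
      simp only [div_eq_mul_inv, mul_inv, one_mul]
      ring
  have hE : (c : ℝ) * (Er.card * (s.factorial * r.choose s)) = 2 * (EG V Er s).card := by
    have h := sum_pairs hs Er hw (fun _ => 1)
    simp only [mul_one, sum_const, nsmul_eq_mul] at h
    rw [← h]
    have h2 : ∑ x : Fin s ↪ V, ∑ y : Fin s ↪ V, wgt Er x y =
        c * (Er.card * r.descFactorial s) := by
      rw [← sum_Dset s Er hcard, mul_sum]
      exact sum_congr rfl fun x _ => hdeg x
    rw [Nat.descFactorial_eq_factorial_mul_choose] at h2
    exact_mod_cast h2.symm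
  have hE0 : ((EG V Er s).card : ℝ) ≠ 0 := by exact_mod_cast hEG.card_pos.ne'
  have hV0 : ((VG V Er s).card : ℝ) ≠ 0 := by exact_mod_cast hVG.card_pos.ne'
  have hb0 : ((r - s).choose s : ℝ) ≠ 0 := by
    exact_mod_cast (Nat.choose_pos (by omega)).ne'
  have hf0 : (s.factorial : ℝ) ≠ 0 := by exact_mod_cast s.factorial_ne_zero
  have hcR : (c : ℝ) = s.factorial * (r - s).choose s := by exact_mod_cast hcc
  rw [htr, ← mul_sum]
  rw [hcR] at hE ⊢
  generalize ∑ t ∈ EG V Er s, 1 / ∏ x ∈ t, (Dset Er (tset x) : ℝ) = S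
  field_simp
  linear_combination (-S) * hE
end

section
/- Let V be a finite set, 1 ≤ s, 2s ≤ r, and E_r a finite set of subsets of V each of cardinality exactly r, with V_G nonempty. Then the third spectral moment of the transformed graph G^(s) restricted to V_G, namely m_3 = (1/|V_G|) Σ_{x ∈ V_G} (P³)_{xx}, satisfies m_3 = (1/(|V_G| · C(r−s,s)³ · (s!)³)) · Σ_{x,y,z ∈ V_G} w(x,y) · w(y,z) · w(z,x) / (D_[x] · D_[y] · D_[z]). -/
/-!
Every hyperedge `e ⊇ [x]` contributes to `d_x` the number of injective `s`-tuples with values in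
the `(r - s)`-element set `e \ [x]`, i.e. the falling factorial `C(r-s,s) · s!`. Hence
`d_x = D_[x] · C(r-s,s) · s!` (`deg_eq_Dset_mul`). Expanding the trace of `P ^ 3` as a sum over
closed walks `x → y → z → x` and substituting this for the three degrees gives the formula.
-/

open Finset

lemma card_filter_tset_subset {V : Type*} [Fintype V] [DecidableEq V] (s : ℕ) (A : Finset V) :
    (Finset.univ.filter fun y : Fin s ↪ V => tset y ⊆ A).card = A.card.descFactorial s := by
  have h : (Finset.univ.filter fun y : Fin s ↪ V => tset y ⊆ A) =
      (Finset.univ : Finset (Fin s ↪ A)).image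
        fun f => f.trans (Function.Embedding.subtype (· ∈ A)) := by
    ext y
    simp only [mem_filter, mem_univ, true_and, mem_image]
    constructor
    · intro hy
      have hmem : ∀ i, y i ∈ A := fun i => hy (by simp [tset])
      exact ⟨⟨fun i => ⟨y i, hmem i⟩, fun i j hij => y.injective (congrArg Subtype.val hij)⟩,
        by ext i; rfl⟩
    · rintro ⟨f, rfl⟩ v hv
      obtain ⟨i, -, rfl⟩ := Finset.mem_map.mp hv
      exact (f i).2
  rw [h, Finset.card_image_of_injective, Finset.card_univ, Fintype.card_embedding_eq]
  · simp
  · intro f g hfg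
    ext i
    exact DFunLike.congr_fun hfg i

/-- Double counting of pairs `(y, e)` with `[y]` disjoint from `[x]` and `[x] ∪ [y] ⊆ e`. -/
lemma deg_eq_Dset_mul {V : Type*} [Fintype V] [DecidableEq V] {r s : ℕ}
    (Er : Finset (Finset V)) (hcard : ∀ e ∈ Er, e.card = r) (x : Fin s ↪ V) :
    deg Er x = Dset Er (tset x) * ((r - s).choose s * s.factorial) := by
  have hw : ∀ y : Fin s ↪ V, wgt Er x y =
      ∑ e ∈ Er.filter (fun e => tset x ⊆ e), if tset y ⊆ e \ tset x then 1 else 0 := by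
    intro y
    rw [← Finset.card_filter, Finset.filter_filter, wgt]
    split_ifs with hd
    · congr 1
      ext e
      simp only [mem_filter, union_subset_iff, subset_sdiff, hd.symm, and_true]
    · rw [eq_comm, Finset.card_eq_zero, Finset.filter_eq_empty_iff]
      rintro e - ⟨-, h⟩
      exact hd (subset_sdiff.mp h).2.symm
  simp only [deg, hw]
  rw [Finset.sum_comm, Dset, ← smul_eq_mul, ← Finset.sum_const]
  refine Finset.sum_congr rfl fun e he => ?_
  obtain ⟨heE, hxe⟩ := Finset.mem_filter.mp he
  rw [← Finset.card_filter, card_filter_tset_subset, card_sdiff_of_subset hxe, card_tset,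
    hcard e heE, Nat.descFactorial_eq_factorial_mul_choose, mul_comm]

/-- The third spectral moment of the transformed graph `G^(s)`
restricted to `V_G` equals
`(1/(|V_G|·C(r-s,s)³·(s!)³)) ∑_{x,y,z ∈ V_G} w(x,y)·w(y,z)·w(z,x) / (D_[x]·D_[y]·D_[z])`. -/
theorem third_moment_transformed_graph
    (V : Type*) [Fintype V] [DecidableEq V]
    (r s : ℕ) (hs : 1 ≤ s) (hrs : 2 * s ≤ r)
    (Er : Finset (Finset V)) (hcard : ∀ e ∈ Er, e.card = r)
    (hVG : (VG V Er s).Nonempty)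
    (P : Matrix (VG V Er s) (VG V Er s) ℝ)
    (hP : ∀ x y, P x y = (wgt Er x.1 y.1 : ℝ) / (deg Er x.1 : ℝ)) :
    (1 / ((VG V Er s).card : ℝ)) * ∑ x, (P ^ 3) x x =
      (1 / (((VG V Er s).card : ℝ) * ((r - s).choose s : ℝ) ^ 3 * (s.factorial : ℝ) ^ 3)) *
        ∑ x ∈ VG V Er s, ∑ y ∈ VG V Er s, ∑ z ∈ VG V Er s,
          ((wgt Er x y : ℝ) * (wgt Er y z : ℝ) * (wgt Er z x : ℝ)) /
            ((Dset Er (tset x) : ℝ) * (Dset Er (tset y) : ℝ) * (Dset Er (tset z) : ℝ)) := by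
  have htrace : ∑ x, (P ^ 3) x x = ∑ x, ∑ y, ∑ z, P x y * P y z * P z x := by
    refine Finset.sum_congr rfl fun x _ => ?_
    rw [pow_succ, pow_two, Matrix.mul_apply]
    simp only [Matrix.mul_apply, Finset.sum_mul]
    rw [Finset.sum_comm]
  rw [htrace]
  simp only [← Finset.sum_coe_sort (VG V Er s)]
  simp only [Finset.mul_sum]
  refine Finset.sum_congr rfl fun x _ => Finset.sum_congr rfl fun y _ =>
    Finset.sum_congr rfl fun z _ => ?_
  simp only [hP, deg_eq_Dset_mul Er hcard, Nat.cast_mul]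
  -- An identity of formal fractions: it needs no non-vanishing, since inversion is
  -- multiplicative even at zero.
  simp only [div_eq_mul_inv, mul_inv, one_mul]
  ring
end
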